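/- There are exactly 26 conjugacy classes of torsion-free subgroups of PSL(2,ℤ) of index 18 and genus zero. -/

import Mathlib

open Matrix

/-- `SL(2,ℤ)`: the group of 2×2 integer matrices of determinant 1. -/
abbrev SL2Z := Matrix.SpecialLinearGroup (Fin 2) ℤ

instance : Fact (Even (Fintype.card (Fin 2))) := ⟨by simp⟩

/-- The subgroup `{±I}` of `SL(2,ℤ)`. -/
def pmOne : Subgroup SL2Z := Subgroup.zpowers (-1 : SL2Z)

instance : pmOne.Normal := by
  constructor
  intro x hx g
  obtain ⟨n, rfl⟩ := hx
  have h : Commute ((-1 : SL2Z) ^ n) g := (Commute.neg_one_left g).zpow_left n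
  refine ⟨n, ?_⟩
  rw [← h.eq, mul_assoc, mul_inv_cancel, mul_one]

/-- `PSL(2,ℤ)`, the modular group, as the quotient of `SL(2,ℤ)` by `{±I}`. -/
abbrev PSL2Z := SL2Z ⧸ pmOne

/-- The natural projection `ξ : SL(2,ℤ) → PSL(2,ℤ)`. -/
def xi : SL2Z →* PSL2Z := QuotientGroup.mk' pmOne

/-- The element `S` of `PSL(2,ℤ)`, the image of `[[0,-1],[1,0]]`. -/
def Sp : PSL2Z := xi ⟨!![0, -1; 1, 0], by norm_num [Matrix.det_fin_two_of]⟩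

/-- The element `T` of `PSL(2,ℤ)`, the image of `[[1,1],[0,1]]`. -/
def Tp : PSL2Z := xi ⟨!![1, 1; 0, 1], by norm_num [Matrix.det_fin_two_of]⟩

/-- The number of left cosets in `PSL(2,ℤ)/Γ` fixed by `g` (for the
left-multiplication action).  For `g = S` this is `e₂(Γ)`, for `g = S*T` it is `e₃(Γ)`. -/
noncomputable def nFix (g : PSL2Z) (Γ : Subgroup PSL2Z) : ℕ :=
  Nat.card {x : PSL2Z ⧸ Γ // g • x = x}

/-- The number of orbits of the cyclic subgroup generated by `g` on `PSL(2,ℤ)/Γ`.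
For `g = S, S*T, T` these are `c₂(Γ), c₃(Γ), h(Γ)` respectively. -/
noncomputable def nOrb (g : PSL2Z) (Γ : Subgroup PSL2Z) : ℕ :=
  Nat.card (MulAction.orbitRel.Quotient (Subgroup.zpowers g) (PSL2Z ⧸ Γ))

/-- `Γ` has genus zero: `c₂(Γ) + c₃(Γ) + h(Γ) = index(Γ) + 2`. -/
def GenusZero (Γ : Subgroup PSL2Z) : Prop :=
  nOrb Sp Γ + nOrb (Sp * Tp) Γ + nOrb Tp Γ = Γ.index + 2

/-- `Γ` is torsion free: it contains no nontrivial element of finite order. -/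
def TorsionFree (Γ : Subgroup PSL2Z) : Prop :=
  ∀ x ∈ Γ, x ≠ 1 → ¬ IsOfFinOrder x

/-- Two subgroups of a group are conjugate. -/
def SubgroupConj {G : Type*} [Group G] (H K : Subgroup G) : Prop :=
  ∃ g : G, Subgroup.map (MulAut.conj g).toMonoidHom H = K

/-- The number of conjugacy classes of subgroups of `PSL(2,ℤ)` satisfying `P`. -/
noncomputable def countClasses (P : Subgroup PSL2Z → Prop) : ℕ :=
  Nat.card (Quot fun A B : {Γ : Subgroup PSL2Z // P Γ} => SubgroupConj A.1 B.1)

/-- The index of the torsion free subgroup `Γ^tf` associated to `Γ`: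
`index(Γ) + 3·e₂(Γ) + 2·e₃(Γ)`. -/
noncomputable def tfIdx (Γ : Subgroup PSL2Z) : ℕ :=
  Γ.index + 3 * nFix Sp Γ + 2 * nFix (Sp * Tp) Γ

/-!
Write `U = S * T`. Torsion elements of `PSL(2,ℤ)` are conjugate to powers of `S` or `U`, so `Γ` is
torsion-free exactly if `S` and `U` act on the cosets of `Γ` without fixed points. In index `n` they
then have `n / 2` and `n / 3` orbits, and genus zero means that `T` has `n / 6 + 2` orbits, the
cusps of `Γ`. As `PSL(2,ℤ)` is the free product of `⟨S⟩` and `⟨U⟩`, conjugacy classes of such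
subgroups correspond to isomorphism classes of pairs of fixed-point-free permutations of orders two
and three that generate a transitive group on `n` points.

These pairs are enumerated by labelling the points, starting from a base point, in the order in
which they are reached, and compared by trying all images of the base point. Base points on a
shortest cusp suffice. For `n < 24` the average cusp width `n / (n / 6 + 2)` is less than `4`, so
such a cusp has width at most `3`; this bounds the search for `n = 18`, which is done by evaluation.
-/

open MulAction

/-! ### The modular group -/

/-- The element `U = S * T` of order three. -/
def Up : PSL2Z := Sp * Tp

theorem xi_surjective : Function.Surjective xi := QuotientGroup.mk'_surjective pmOne

theorem xi_eq_one_iff {A : SL2Z} : xi A = 1 ↔ A = 1 ∨ A = -1 := by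
  refine (QuotientGroup.eq_one_iff A).trans ⟨?_, ?_⟩
  · rintro ⟨n, rfl⟩
    exact n.even_or_odd.imp Even.neg_one_zpow Odd.neg_one_zpow
  · rintro (rfl | rfl)
    exacts [pmOne.one_mem, Subgroup.mem_zpowers _]

theorem xi_eq_xi_iff {A B : SL2Z} : xi A = xi B ↔ A = B ∨ A = -B := by
  rw [← mul_inv_eq_one, ← map_inv, ← map_mul, xi_eq_one_iff, mul_inv_eq_one,
    mul_inv_eq_iff_eq_mul, neg_one_mul]

theorem xi_neg (A : SL2Z) : xi (-A) = xi A := xi_eq_xi_iff.2 (Or.inr rfl)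

theorem xi_S : xi ModularGroup.S = Sp := rfl

theorem xi_T : xi ModularGroup.T = Tp := rfl

theorem xi_S_mul_T : xi (ModularGroup.S * ModularGroup.T) = Up := rfl

theorem Sp_sq : Sp ^ 2 = 1 := by
  rw [← xi_S, ← map_pow, xi_eq_one_iff]
  right
  decide

theorem Up_cube : Up ^ 3 = 1 := by
  rw [← xi_S_mul_T, ← map_pow, xi_eq_one_iff]
  right
  decide

theorem Sp_mul_Up : Sp * Up = Tp := by
  rw [Up, ← mul_assoc, ← sq, Sp_sq, one_mul]

theorem Sp_ne_one : Sp ≠ 1 := by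
  rw [← xi_S, Ne, xi_eq_one_iff]
  decide

theorem Up_ne_one : Up ≠ 1 := by
  rw [← xi_S_mul_T, Ne, xi_eq_one_iff]
  decide

theorem orderOf_Sp : orderOf Sp = 2 := orderOf_eq_prime Sp_sq Sp_ne_one

theorem orderOf_Up : orderOf Up = 3 := orderOf_eq_prime Up_cube Up_ne_one

theorem isOfFinOrder_Sp : IsOfFinOrder Sp := orderOf_pos_iff.1 (by simp [orderOf_Sp])

theorem isOfFinOrder_Up : IsOfFinOrder Up := orderOf_pos_iff.1 (by simp [orderOf_Up])

theorem closure_Sp_Up : Subgroup.closure {Sp, Up} = ⊤ := by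
  have h : Subgroup.closure {Sp, Tp} = ⊤ := by
    rw [← MonoidHom.range_eq_top.2 xi_surjective, MonoidHom.range_eq_map,
      ← SpecialLinearGroup.SL2Z_generators, MonoidHom.map_closure, Set.image_pair, xi_S, xi_T]
  have hS : Sp ∈ Subgroup.closure {Sp, Up} := Subgroup.subset_closure (by simp)
  have hU : Up ∈ Subgroup.closure {Sp, Up} := Subgroup.subset_closure (by simp)
  rw [eq_top_iff, ← h, Subgroup.closure_le]
  rintro x (rfl | rfl)
  exacts [hS, Sp_mul_Up ▸ mul_mem hS hU]

theorem mclosure_Sp_Up : Submonoid.closure {Sp, Up} = ⊤ := by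
  rw [← Subgroup.closure_toSubmonoid_of_isOfFinOrder, closure_Sp_Up, Subgroup.top_toSubmonoid]
  rintro x (rfl | rfl)
  exacts [isOfFinOrder_Sp, isOfFinOrder_Up]

theorem S_mul_apply_zero (A : SL2Z) (j : Fin 2) : (ModularGroup.S * A) 0 j = -A 1 j := by
  simp [ModularGroup.coe_S, Matrix.mul_apply]

theorem S_mul_apply_one (A : SL2Z) (j : Fin 2) : (ModularGroup.S * A) 1 j = A 0 j := by
  simp [ModularGroup.coe_S, Matrix.mul_apply]

theorem T_mul_apply_zero (A : SL2Z) (j : Fin 2) : (ModularGroup.T * A) 0 j = A 0 j + A 1 j := by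
  simp [ModularGroup.coe_T, Matrix.mul_apply]

theorem T_mul_apply_one (A : SL2Z) (j : Fin 2) : (ModularGroup.T * A) 1 j = A 1 j :=
  congrFun (ModularGroup.T_mul_apply_one A) j

/-! ### The modular group as a free product -/

/-- The product of the entries in the first column, which is insensitive to the sign of the
matrix. Its sign is the ping-pong invariant separating the factors `⟨S⟩` and `⟨U⟩`. -/
def firstColProd (x : PSL2Z) : ℤ :=
  Quotient.liftOn' x (fun A : SL2Z => A 0 0 * A 1 0) fun A B h => by
    have h : xi A = xi B := Quotient.sound' h
    rcases xi_eq_xi_iff.1 h with rfl | rfl <;> simp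

theorem firstColProd_xi (A : SL2Z) : firstColProd (xi A) = A 0 0 * A 1 0 := rfl

theorem firstColProd_Sp_mul {x : PSL2Z} (hx : firstColProd x < 0) : 0 < firstColProd (Sp * x) := by
  obtain ⟨A, rfl⟩ := xi_surjective x
  rw [firstColProd_xi] at hx
  rw [← xi_S, ← map_mul, firstColProd_xi, S_mul_apply_zero, S_mul_apply_one]
  linarith

theorem firstColProd_Up_mul {x : PSL2Z} (hx : 0 < firstColProd x) : firstColProd (Up * x) < 0 := by
  obtain ⟨A, rfl⟩ := xi_surjective x
  rw [firstColProd_xi] at hx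
  rw [← xi_S_mul_T, ← map_mul, firstColProd_xi, mul_assoc, S_mul_apply_zero, S_mul_apply_one,
    T_mul_apply_zero, T_mul_apply_one]
  nlinarith [sq_nonneg (A 1 0)]

theorem firstColProd_Up_sq_mul {x : PSL2Z} (hx : 0 < firstColProd x) :
    firstColProd (Up ^ 2 * x) < 0 := by
  obtain ⟨A, rfl⟩ := xi_surjective x
  rw [firstColProd_xi] at hx
  rw [← xi_S_mul_T, ← map_pow, ← map_mul, firstColProd_xi, sq, mul_assoc, mul_assoc, mul_assoc]
  simp only [S_mul_apply_zero, S_mul_apply_one, T_mul_apply_zero, T_mul_apply_one]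
  nlinarith [sq_nonneg (A 0 0)]

theorem exists_monoidHom_of_injective_lift_zpowers {ι G G' : Type*} [Group G] [Group G'] {g : ι → G}
    (hinj : Function.Injective (Monoid.CoprodI.lift fun i : ι => (Subgroup.zpowers (g i)).subtype))
    (hgen : Subgroup.closure (Set.range g) = ⊤) {g' : ι → G'}
    (hg' : ∀ i, orderOf (g' i) ∣ orderOf (g i)) : ∃ φ : G →* G', ∀ i, φ (g i) = g' i := by
  let gen (i : ι) : Subgroup.zpowers (g i) := ⟨g i, Subgroup.mem_zpowers _⟩
  have hgen' (i : ι) (x : Subgroup.zpowers (g i)) : x ∈ Subgroup.zpowers (gen i) := by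
    obtain ⟨k, hk⟩ := x.2
    exact ⟨k, Subtype.ext hk⟩
  have hord (i : ι) : orderOf (g' i) ∣ orderOf (gen i) := by
    rw [Subgroup.orderOf_mk]
    exact hg' i
  let F := Monoid.CoprodI.lift fun i : ι => (Subgroup.zpowers (g i)).subtype
  have hF (i : ι) : F (Monoid.CoprodI.of (gen i)) = g i := Monoid.CoprodI.lift_of _ _
  have hsurj : Function.Surjective F := by
    rw [← MonoidHom.range_eq_top, eq_top_iff, ← hgen, Subgroup.closure_le]
    rintro _ ⟨i, rfl⟩
    exact ⟨_, hF i⟩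
  let e := MulEquiv.ofBijective F ⟨hinj, hsurj⟩
  refine ⟨(Monoid.CoprodI.lift fun i => monoidHomOfForallMemZpowers (hgen' i) (hord i)).comp
    e.symm.toMonoidHom, fun i => ?_⟩
  have he : e.symm (g i) = Monoid.CoprodI.of (M := fun i => Subgroup.zpowers (g i)) (gen i) :=
    e.symm_apply_eq.2 (hF i).symm
  calc _ = Monoid.CoprodI.lift (fun i : ι => monoidHomOfForallMemZpowers (hgen' i) (hord i))
        (e.symm (g i)) := rfl
    _ = g' i := by rw [he, Monoid.CoprodI.lift_of, monoidHomOfForallMemZpowers_apply_gen]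

theorem exists_pow_eq_of_mem_zpowers {G : Type*} [Group G] {g x : G} (hg : IsOfFinOrder g)
    (hx : x ∈ Subgroup.zpowers g) : ∃ k < orderOf g, g ^ k = x := by
  classical
  simpa using hg.mem_zpowers_iff_mem_range_orderOf.1 hx

theorem eq_of_mem_zpowers_Sp {x : PSL2Z} (hx : x ∈ Subgroup.zpowers Sp) (h1 : x ≠ 1) : x = Sp := by
  obtain ⟨k, hk, rfl⟩ := exists_pow_eq_of_mem_zpowers isOfFinOrder_Sp hx
  rw [orderOf_Sp] at hk
  interval_cases k <;> simp_all

theorem eq_of_mem_zpowers_Up {x : PSL2Z} (hx : x ∈ Subgroup.zpowers Up) (h1 : x ≠ 1) :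
    x = Up ∨ x = Up ^ 2 := by
  obtain ⟨k, hk, rfl⟩ := exists_pow_eq_of_mem_zpowers isOfFinOrder_Up hx
  rw [orderOf_Up] at hk
  interval_cases k <;> simp_all

theorem injective_lift_zpowers_Sp_Up : Function.Injective (Monoid.CoprodI.lift
    fun b : Bool => (Subgroup.zpowers (bif b then Up else Sp)).subtype) := by
  have hcard : Cardinal.mk (Subgroup.zpowers Up) = 3 := by
    have : Finite (Subgroup.zpowers Up) := finite_zpowers.2 isOfFinOrder_Up
    rw [← Nat.cast_card, Nat.card_zpowers, orderOf_Up, Nat.cast_ofNat]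
  refine Monoid.CoprodI.lift_injective_of_ping_pong _ (Or.inr ⟨true, hcard.ge⟩)
    (fun b => bif b then {x | firstColProd x < 0} else {x | 0 < firstColProd x}) ?_ ?_ ?_
  · have h : 0 < firstColProd (xi ⟨!![1, 0; 1, 1], by simp⟩) := one_pos
    rintro (_ | _)
    exacts [⟨_, h⟩, ⟨_, firstColProd_Up_mul h⟩]
  · have h : Disjoint {x | 0 < firstColProd x} {x | firstColProd x < 0} :=
      Set.disjoint_left.2 fun x (hx : 0 < firstColProd x) => hx.not_gt
    rintro (_ | _) (_ | _) hij
    exacts [absurd rfl hij, h, h.symm, absurd rfl hij]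
  · rintro (_ | _) (_ | _) hij ⟨x, hx⟩ hx1 _ ⟨y, hy, rfl⟩
    · exact absurd rfl hij
    · obtain rfl := eq_of_mem_zpowers_Sp hx (hx1 <| Subtype.ext ·)
      exact firstColProd_Sp_mul hy
    · obtain rfl | rfl := eq_of_mem_zpowers_Up hx (hx1 <| Subtype.ext ·)
      exacts [firstColProd_Up_mul hy, firstColProd_Up_sq_mul hy]
    · exact absurd rfl hij

theorem exists_monoidHom_map_Sp_map_Up {G : Type*} [Group G] {s u : G} (hs : s ^ 2 = 1)
    (hu : u ^ 3 = 1) : ∃ φ : PSL2Z →* G, φ Sp = s ∧ φ Up = u := by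
  have hgen : Subgroup.closure (Set.range fun b : Bool => bif b then Up else Sp) = ⊤ := by
    rw [← closure_Sp_Up]
    congr 1
    ext x
    simp
  have hord (b : Bool) : orderOf (bif b then u else s) ∣ orderOf (bif b then Up else Sp) := by
    cases b
    · exact (orderOf_dvd_of_pow_eq_one hs).trans orderOf_Sp.symm.dvd
    · exact (orderOf_dvd_of_pow_eq_one hu).trans orderOf_Up.symm.dvd
  obtain ⟨φ, hφ⟩ := exists_monoidHom_of_injective_lift_zpowers injective_lift_zpowers_Sp_Up hgen
    hord
  exact ⟨φ, hφ false, hφ true⟩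

/-! ### Torsion in the modular group -/

theorem sq_eq_trace_smul_sub_one {R : Type*} [CommRing R] {A : Matrix (Fin 2) (Fin 2) R}
    (hA : A.det = 1) : A ^ 2 = A.trace • A - 1 := by
  nontriviality R
  have h := A.aeval_self_charpoly
  rw [Matrix.charpoly_fin_two, hA] at h
  simp only [map_add, map_sub, map_mul, map_pow, Polynomial.aeval_X, Polynomial.aeval_C, map_one,
    Algebra.algebraMap_eq_smul_one, smul_mul_assoc, one_mul] at h
  rw [← sub_eq_zero, ← h]
  abel

open Polynomial.Chebyshev in
theorem pow_succ_eq_chebyshevS_smul {R : Type*} [CommRing R] {A : Matrix (Fin 2) (Fin 2) R}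
    (hA : A.det = 1) (n : ℕ) :
    A ^ (n + 1) = (S R n).eval A.trace • A - (S R (n - 1)).eval A.trace • 1 := by
  induction n with
  | zero => simp
  | succ n ih =>
    rw [pow_succ, ih, sub_mul, smul_mul_assoc, ← sq, sq_eq_trace_smul_sub_one hA, smul_mul_assoc,
      one_mul, Nat.cast_succ, S_add_one, add_sub_cancel_right, Polynomial.eval_sub,
      Polynomial.eval_mul, Polynomial.eval_X]
    module

open Polynomial.Chebyshev in
theorem eval_chebyshevS_ne_zero {R : Type*} [CommRing R] [LinearOrder R] [IsStrictOrderedRing R]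
    {t : R} (ht : 2 ≤ |t|) (n : ℕ) : (S R n).eval t ≠ 0 := by
  have h : |(S R (n - 1)).eval t| < |(S R n).eval t| := by
    induction n with
    | zero => simp
    | succ n ih =>
      rw [Nat.cast_succ, S_add_one, add_sub_cancel_right, Polynomial.eval_sub, Polynomial.eval_mul,
        Polynomial.eval_X]
      have h1 := abs_sub_abs_le_abs_sub (t * (S R n).eval t) ((S R (n - 1)).eval t)
      have h2 := mul_le_mul_of_nonneg_right ht (abs_nonneg ((S R n).eval t))
      rw [abs_mul] at h1
      linarith
  exact abs_pos.1 ((abs_nonneg _).trans_lt h)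

theorem exists_eq_smul_one_of_pow_eq_one {R : Type*} [CommRing R] [LinearOrder R]
    [IsStrictOrderedRing R] {A : Matrix (Fin 2) (Fin 2) R} (hA : A.det = 1) (ht : 2 ≤ |A.trace|)
    {n : ℕ} (hn : n ≠ 0) (h : A ^ n = 1) : ∃ a : R, A = a • 1 := by
  obtain ⟨n, rfl⟩ := Nat.exists_eq_succ_of_ne_zero hn
  rw [Nat.succ_eq_add_one, pow_succ_eq_chebyshevS_smul hA, ← Matrix.ext_iff] at h
  have hs := eval_chebyshevS_ne_zero ht n
  generalize (Polynomial.Chebyshev.S R n).eval A.trace = s at h hs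
  have h00 := h 0 0
  have h01 := h 0 1
  have h10 := h 1 0
  have h11 := h 1 1
  simp only [Matrix.sub_apply, Matrix.smul_apply, Matrix.one_apply, smul_eq_mul, Fin.isValue,
    if_true, zero_ne_one, one_ne_zero, if_false, mul_zero, mul_one, sub_zero, mul_eq_zero, hs,
    false_or] at h00 h01 h10 h11
  have hd : A 1 1 = A 0 0 := mul_left_cancel₀ hs (by linear_combination h11 - h00)
  refine ⟨A 0 0, ?_⟩
  rw [Matrix.eta_fin_two A, h01, h10, hd, Matrix.one_fin_two]
  simp

theorem abs_trace_lt_two_of_isOfFinOrder {A : SL2Z} (hA : IsOfFinOrder A) (h1 : A ≠ 1)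
    (h2 : A ≠ -1) : |A.1.trace| < 2 := by
  by_contra! ht
  obtain ⟨n, hn, hAn⟩ := isOfFinOrder_iff_pow_eq_one.1 hA
  obtain ⟨a, ha⟩ := exists_eq_smul_one_of_pow_eq_one A.2 ht hn.ne' (congrArg Subtype.val hAn)
  have hdet := A.2
  rw [ha, Matrix.det_smul, Matrix.det_one, mul_one, Fintype.card_fin, sq_eq_one_iff] at hdet
  rcases hdet with rfl | rfl
  · exact h1 (Subtype.ext (by simpa using ha))
  · exact h2 (Subtype.ext (by simpa using ha))

open UpperHalfPlane in
theorem exists_smul_eq_self_of_isOfFinOrder {A : SL2Z} (hA : IsOfFinOrder A) (h1 : A ≠ 1)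
    (h2 : A ≠ -1) : ∃ z : ℍ, A • z = z := by
  have ht : (A.1.trace : ℝ) ^ 2 < 2 ^ 2 := by
    rw [sq_lt_sq, abs_two]
    exact_mod_cast abs_trace_lt_two_of_isOfFinOrder hA h1 h2
  have hdet : ((A : GL (Fin 2) ℝ) : Matrix (Fin 2) (Fin 2) ℝ).det = 1 :=
    (Matrix.SpecialLinearGroup.map (Int.castRingHom ℝ) A).det_coe
  have htrace : ((A : GL (Fin 2) ℝ) : Matrix (Fin 2) (Fin 2) ℝ).trace = A.1.trace := by
    simp [Matrix.trace_fin_two]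
  have hell : (A : GL (Fin 2) ℝ).IsElliptic := by
    rw [Matrix.GeneralLinearGroup.IsElliptic, Matrix.IsElliptic, Matrix.discr_fin_two, hdet, htrace]
    linarith
  exact ⟨_, (gl_smul_eq_self_iff_eq_fixedPt (hdet ▸ one_pos) hell).2 rfl⟩

open UpperHalfPlane ModularGroup in
theorem exists_conj_smul_I_or_smul_ρ {A : SL2Z} (hA : IsOfFinOrder A) (h1 : A ≠ 1) (h2 : A ≠ -1) :
    ∃ g : SL2Z, (g * A * g⁻¹) • I = I ∨ (g * A * g⁻¹) • ρ = ρ := by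
  obtain ⟨z, hz⟩ := exists_smul_eq_self_of_isOfFinOrder hA h1 h2
  obtain ⟨g, hg⟩ := exists_smul_mem_fd z
  have hfix {w : ℍ} {k : SL2Z} (hw : k • z = w) : (k * A * k⁻¹) • w = w := by
    rw [← hw, mul_smul, mul_smul, inv_smul_smul, hz]
  by_cases hI : g • z = I
  · exact ⟨g, Or.inl (hfix hI)⟩
  by_cases hρ : g • z = ρ
  · exact ⟨g, Or.inr (hfix hρ)⟩
  by_cases hρ' : g • z = (1 : ℝ) +ᵥ ρ
  · refine ⟨T⁻¹ * g, Or.inr (hfix ?_)⟩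
    rw [mul_smul, hρ', ← modular_T_smul, inv_smul_smul]
  · rcases stabilizer_of_ne hg (hfix rfl) hI hρ hρ' with h | h
    · exact absurd (conj_eq_one_iff.1 h) h1
    · exact absurd (mul_left_cancel (a := g) (by simpa [mul_inv_eq_iff_eq_mul] using h)) h2

open ModularGroup in
theorem isConj_of_isOfFinOrder {x : PSL2Z} (hx : IsOfFinOrder x) (h1 : x ≠ 1) :
    IsConj x Sp ∨ IsConj x Up ∨ IsConj x Up⁻¹ := by
  obtain ⟨A, rfl⟩ := xi_surjective x
  have hA : IsOfFinOrder A := by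
    obtain ⟨n, hn, hAn⟩ := isOfFinOrder_iff_pow_eq_one.1 hx
    rw [← map_pow, xi_eq_one_iff] at hAn
    refine isOfFinOrder_iff_pow_eq_one.2 ⟨n * 2, by positivity, ?_⟩
    rw [pow_mul]
    rcases hAn with h | h <;> simp [h]
  obtain ⟨g, hg⟩ := exists_conj_smul_I_or_smul_ρ hA (fun h => h1 (xi_eq_one_iff.2 (Or.inl h)))
    (fun h => h1 (xi_eq_one_iff.2 (Or.inr h)))
  have hconj : IsConj (xi A) (xi (g * A * g⁻¹)) :=
    isConj_iff.2 ⟨xi g, by rw [map_mul, map_mul, map_inv]⟩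
  have hne : xi (g * A * g⁻¹) ≠ 1 := fun h => h1 (isConj_one_left.1 (h ▸ hconj))
  have hinv : xi (T⁻¹ * S) = Up⁻¹ := by
    rw [← xi_S_mul_T, ← map_inv, _root_.mul_inv_rev, S_inv, mul_neg, xi_neg]
  generalize g * A * g⁻¹ = B at hg hconj hne
  rw [stabilizer_I, stabilizer_ρ] at hg
  simp only [Finset.mem_insert, Finset.mem_singleton] at hg
  rw [Ne, xi_eq_one_iff, not_or] at hne
  simp only [hne, false_or] at hg
  rcases hg with (rfl | rfl) | rfl | rfl | rfl | rfl
  · exact Or.inl hconj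
  · exact Or.inl (by rwa [xi_neg] at hconj)
  · exact Or.inr (Or.inl hconj)
  · exact Or.inr (Or.inl (by rwa [xi_neg] at hconj))
  · exact Or.inr (Or.inr (hinv ▸ hconj))
  · exact Or.inr (Or.inr (by rwa [xi_neg, hinv] at hconj))

theorem torsionFree_iff {Γ : Subgroup PSL2Z} :
    TorsionFree Γ ↔ (∀ x : PSL2Z ⧸ Γ, Sp • x ≠ x) ∧ ∀ x : PSL2Z ⧸ Γ, Up • x ≠ x := by
  have hfix (g h : PSL2Z) : g • (h : PSL2Z ⧸ Γ) = h ↔ h⁻¹ * g * h ∈ Γ := by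
    rw [eq_comm, MulAction.Quotient.smul_coe, smul_eq_mul, QuotientGroup.eq, mul_assoc]
  have hfree (hΓ : TorsionFree Γ) {g : PSL2Z} (hg : IsOfFinOrder g) (hg1 : g ≠ 1)
      (x : PSL2Z ⧸ Γ) : g • x ≠ x := by
    obtain ⟨h, rfl⟩ := QuotientGroup.mk_surjective x
    rw [Ne, hfix]
    refine fun hmem => hΓ _ hmem ?_ ?_
    · simpa using (conj_eq_one_iff (a := h⁻¹)).not.2 hg1
    · exact (isConj_iff.2 ⟨h⁻¹, by rw [inv_inv]⟩).isOfFinOrder hg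
  refine ⟨fun hΓ => ⟨hfree hΓ isOfFinOrder_Sp Sp_ne_one, hfree hΓ isOfFinOrder_Up Up_ne_one⟩, ?_⟩
  rintro ⟨hS, hU⟩ x hx h1 hfin
  have hconj {y : PSL2Z} (h : IsConj x y) : ∃ z : PSL2Z ⧸ Γ, y • z = z := by
    obtain ⟨c, rfl⟩ := isConj_iff.1 h
    refine ⟨c, (hfix _ _).2 ?_⟩
    simpa [mul_assoc] using hx
  rcases isConj_of_isOfFinOrder hfin h1 with h | h | h
  · exact (hconj h).elim hS
  · exact (hconj h).elim hU
  · obtain ⟨z, hz⟩ := hconj h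
    exact hU z (inv_smul_eq_iff.1 hz).symm

/-! ### Orbit counts and the genus -/

theorem card_orbitRel_zpowers_mul_orderOf {G X : Type*} [Group G] [MulAction G X] {g : G}
    (hg : (orderOf g).Prime) (hfix : ∀ x : X, g • x ≠ x) :
    Nat.card (orbitRel.Quotient (Subgroup.zpowers g) X) * orderOf g = Nat.card X := by
  have : Fact (Nat.card (Subgroup.zpowers g)).Prime := ⟨by rwa [Nat.card_zpowers]⟩
  have hstab (x : X) : stabilizer (Subgroup.zpowers g) x = ⊥ := by
    refine (Subgroup.eq_bot_or_eq_top_of_prime_card _).resolve_right fun h => hfix x ?_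
    have : (⟨g, Subgroup.mem_zpowers g⟩ : Subgroup.zpowers g) ∈ stabilizer _ x :=
      h ▸ Subgroup.mem_top _
    exact this
  rw [Nat.card_congr (selfEquivOrbitsQuotientProd hstab), Nat.card_prod, Nat.card_zpowers]

theorem genusZero_iff_of_torsionFree {Γ : Subgroup PSL2Z} (hΓ : TorsionFree Γ) :
    GenusZero Γ ↔ 6 * nOrb Tp Γ = Γ.index + 12 := by
  obtain ⟨hS, hU⟩ := torsionFree_iff.1 hΓ
  have h2 : nOrb Sp Γ * orderOf Sp = Γ.index :=
    card_orbitRel_zpowers_mul_orderOf (by rw [orderOf_Sp]; exact Nat.prime_two) hS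
  have h3 : nOrb (Sp * Tp) Γ * orderOf Up = Γ.index :=
    card_orbitRel_zpowers_mul_orderOf (g := Up) (by rw [orderOf_Up]; exact Nat.prime_three) hU
  rw [orderOf_Sp] at h2
  rw [orderOf_Up] at h3
  rw [GenusZero]
  omega

/-! ### Conjugacy of subgroups through coset actions -/

theorem map_smul_of_mclosure_eq_top {M X Y : Type*} [Monoid M] [MulAction M X] [MulAction M Y]
    {s : Set M} (hs : Submonoid.closure s = ⊤) {φ : X → Y}
    (hφ : ∀ g ∈ s, ∀ x, φ (g • x) = g • φ x) (g : M) : ∀ x, φ (g • x) = g • φ x := by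
  have hg : g ∈ Submonoid.closure s := hs ▸ Submonoid.mem_top g
  induction hg using Submonoid.closure_induction with
  | mem g hg => exact hφ g hg
  | one => simp only [one_smul, implies_true]
  | mul a b _ _ ha hb => simp only [mul_smul, ha, hb, implies_true]

theorem smul_mem_of_mclosure_eq_top {M X : Type*} [Monoid M] [MulAction M X] {s : Set M}
    (hs : Submonoid.closure s = ⊤) {A : Set X} (hA : ∀ g ∈ s, ∀ x ∈ A, g • x ∈ A) (g : M) :
    ∀ x ∈ A, g • x ∈ A := by
  have hg : g ∈ Submonoid.closure s := hs ▸ Submonoid.mem_top g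
  induction hg using Submonoid.closure_induction with
  | mem g hg => exact hA g hg
  | one => simp only [one_smul, imp_self, implies_true]
  | mul a b _ _ ha hb => exact fun x hx => mul_smul a b x ▸ ha _ (hb x hx)

section SubgroupConj

variable {G : Type*} [Group G] {H K : Subgroup G}

theorem subgroupConj_equivalence : Equivalence (SubgroupConj (G := G)) where
  refl H := ⟨1, by ext; simp⟩
  symm := by
    rintro H _ ⟨g, rfl⟩
    exact ⟨g⁻¹, by ext; simp [mul_assoc]⟩
  trans := by
    rintro H _ _ ⟨g, rfl⟩ ⟨k, rfl⟩
    exact ⟨k * g, by rw [Subgroup.map_map, map_mul]; rfl⟩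

theorem SubgroupConj.index_eq (h : SubgroupConj H K) : H.index = K.index := by
  obtain ⟨g, rfl⟩ := h
  exact (Subgroup.index_map_equiv H (MulAut.conj g)).symm

theorem SubgroupConj.nonempty_mulActionHom (h : SubgroupConj H K) :
    Nonempty ((G ⧸ H) →[G] (G ⧸ K)) := by
  obtain ⟨g, rfl⟩ := h
  refine ⟨⟨Quotient.map' (· * g⁻¹) fun a b hab => ?_, ?_⟩⟩
  · rw [QuotientGroup.leftRel_apply] at hab ⊢
    exact ⟨_, hab, by simp [mul_assoc]⟩
  · rintro a ⟨x⟩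
    exact congrArg QuotientGroup.mk (mul_assoc a x g⁻¹)

theorem subgroupConj_of_mulActionHom (hH : H.index ≠ 0) (h : H.index = K.index)
    (φ : (G ⧸ H) →[G] (G ⧸ K)) : SubgroupConj H K := by
  obtain ⟨k, hk⟩ := QuotientGroup.mk_surjective (φ ((1 : G) : G ⧸ H))
  have hle : H ≤ K.map (MulAut.conj k).toMonoidHom := by
    intro x hx
    have h1 : x • ((1 : G) : G ⧸ H) = (1 : G) := by simpa [QuotientGroup.eq] using hx
    have h2 : x • (k : G ⧸ K) = k := by rw [hk, ← map_smul, h1]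
    rw [eq_comm, MulAction.Quotient.smul_coe, QuotientGroup.eq] at h2
    exact ⟨_, h2, by simp [mul_assoc]⟩
  have hconj : SubgroupConj K (K.map (MulAut.conj k).toMonoidHom) := ⟨k, rfl⟩
  refine subgroupConj_equivalence.symm ⟨k, le_antisymm (Subgroup.relIndex_eq_one.1 ?_) hle⟩
  have hrel := Subgroup.relIndex_mul_index hle
  rw [← hconj.index_eq, ← h] at hrel
  exact Nat.eq_of_mul_eq_mul_right (Nat.pos_of_ne_zero hH) (hrel.trans (one_mul _).symm)

theorem subgroupConj_iff_nonempty_mulActionHom (hH : H.index ≠ 0) (h : H.index = K.index) :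
    SubgroupConj H K ↔ Nonempty ((G ⧸ H) →[G] (G ⧸ K)) :=
  ⟨SubgroupConj.nonempty_mulActionHom, fun ⟨φ⟩ => subgroupConj_of_mulActionHom hH h φ⟩

end SubgroupConj

theorem card_quot_eq_card_of_reps {α ι : Type*} {r : α → α → Prop} (hr : Equivalence r) (G : ι → α)
    (hinj : ∀ i j, r (G i) (G j) → i = j) (hsurj : ∀ a, ∃ i, r (G i) a) :
    Nat.card (Quot r) = Nat.card ι := by
  refine (Nat.card_eq_of_bijective (fun i => Quot.mk r (G i)) ⟨fun i j h => ?_, ?_⟩).symm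
  · exact hinj i j (hr.eqvGen_iff.1 (Quot.eqvGen_exact h))
  · rintro ⟨a⟩
    exact (hsurj a).imp fun i hi => Quot.sound hi

/-! ### Counting orbits of a cyclic group by their least labels -/

theorem mem_orbit_zpowers_iff_exists_lt {G X : Type*} [Group G] [MulAction G X] [Finite X] {g : G}
    {x y : X} : y ∈ orbit (Subgroup.zpowers g) x ↔ ∃ k < Nat.card X, g ^ k • x = y := by
  refine ⟨?_, ?_⟩
  · have := Fintype.ofFinite (orbit (Subgroup.zpowers g) x)
    have hpos : 0 < Function.minimalPeriod (g • ·) x := Nat.pos_of_neZero _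
    have hle : Function.minimalPeriod (g • ·) x ≤ Nat.card X := by
      rw [minimalPeriod_eq_card, ← Nat.card_eq_fintype_card]
      exact Nat.card_le_card_of_injective _ Subtype.val_injective
    rintro ⟨⟨_, k, rfl⟩, rfl⟩
    have hnonneg := Int.emod_nonneg k (Int.natCast_pos.2 hpos).ne'
    have hlt := Int.emod_lt_of_pos k (Int.natCast_pos.2 hpos)
    refine ⟨(k % Function.minimalPeriod (g • ·) x).toNat, by lia, ?_⟩
    rw [← zpow_natCast, Int.toNat_of_nonneg hnonneg, zpow_smul_mod_minimalPeriod]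
    rfl
  · rintro ⟨k, -, rfl⟩
    exact ⟨⟨g ^ k, Subgroup.npow_mem_zpowers g k⟩, rfl⟩

theorem card_quotient_eq_ncard_of_surjOn {α X : Type*} [LinearOrder α] [WellFoundedLT α]
    (r : Setoid X) {f : α → X} {A : Set α} (hf : Set.SurjOn f A Set.univ) :
    Nat.card (Quotient r) = {a ∈ A | ∀ b ∈ A, r (f a) (f b) → a ≤ b}.ncard := by
  refine (Nat.card_eq_of_bijective
    (fun a : {a ∈ A | ∀ b ∈ A, r (f a) (f b) → a ≤ b} => Quotient.mk r (f a)) ⟨?_, ?_⟩).symm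
  · rintro ⟨a, ha, hmin⟩ ⟨b, hb, hmin'⟩ h
    have h := Quotient.exact h
    exact Subtype.ext ((hmin b hb h).antisymm (hmin' a ha (r.symm h)))
  · rintro ⟨x⟩
    have hne : {a ∈ A | r x (f a)}.Nonempty := by
      obtain ⟨a, ha, rfl⟩ := hf (Set.mem_univ x)
      exact ⟨a, ha, r.refl _⟩
    obtain ⟨a, ⟨ha, hxa⟩, hmin⟩ := WellFounded.has_min wellFounded_lt _ hne
    refine ⟨⟨a, ha, fun b hb hab => ?_⟩, Quotient.sound (r.symm hxa)⟩
    exact not_lt.1 (hmin b ⟨hb, r.trans hxa hab⟩)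

/-! ### Labelled actions -/

section

variable {X : Type*} [MulAction PSL2Z X]

theorem Sp_smul_Sp_smul (x : X) : Sp • Sp • x = x := by
  rw [← mul_smul, ← sq, Sp_sq, one_smul]

theorem Up_smul_Up_smul_Up_smul (x : X) : Up • Up • Up • x = x := by
  rw [← mul_smul, ← mul_smul, ← pow_three', Up_cube, one_smul]

theorem injOn_Up_pow_smul (hU : ∀ x : X, Up • x ≠ x) (x : X) :
    Set.InjOn (fun k : ℕ => Up ^ k • x) (Set.Iio 3) := by
  have hper : Function.minimalPeriod (Up • ·) x = 3 :=
    Function.minimalPeriod_eq_prime (Up_smul_Up_smul_Up_smul x) (hU x)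
  have h := Function.iterate_injOn_Iio_minimalPeriod (f := (Up • ·)) (x := x)
  simp only [hper, smul_iterate] at h
  exact h

end

/-- The action of `U` on labels. The points of a finite `PSL(2,ℤ)`-set on which `U` has no fixed
point are labelled by `1, …, n` in such a way that `U` has the cycles `(1 2 3), (4 5 6), …`. -/
def rot (i : ℕ) : ℕ := if i % 3 = 0 then i - 2 else i + 1

/-- The action of `T = S * U` on labels, when `S` acts by `s`. -/
def cuspStep (s : ℕ → ℕ) (i : ℕ) : ℕ := s (rot i)

/-- `s` describes a fixed-point-free involution of the labels `1, …, n` that, together with `rot`,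
acts transitively. Transitivity is built in by requiring that each cycle of `rot` other than
`(1 2 3)` is entered, at its first label, from a smaller label. -/
structure IsTable (n : ℕ) (s : ℕ → ℕ) : Prop where
  three_dvd : 3 ∣ n
  mapsTo : ∀ i ∈ Finset.Icc 1 n, s i ∈ Finset.Icc 1 n
  involutive : ∀ i ∈ Finset.Icc 1 n, s (s i) = i
  ne : ∀ i ∈ Finset.Icc 1 n, s i ≠ i
  lt : ∀ i ∈ Finset.Icc 1 n, i % 3 = 1 → i ≠ 1 → s i < i

instance (n : ℕ) (s : ℕ → ℕ) : Decidable (IsTable n s) :=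
  decidable_of_iff (3 ∣ n ∧ (∀ i ∈ Finset.Icc 1 n, s i ∈ Finset.Icc 1 n) ∧
      (∀ i ∈ Finset.Icc 1 n, s (s i) = i) ∧ (∀ i ∈ Finset.Icc 1 n, s i ≠ i) ∧
      ∀ i ∈ Finset.Icc 1 n, i % 3 = 1 → i ≠ 1 → s i < i)
    ⟨fun ⟨h1, h2, h3, h4, h5⟩ => ⟨h1, h2, h3, h4, h5⟩, fun ⟨h1, h2, h3, h4, h5⟩ =>
      ⟨h1, h2, h3, h4, h5⟩⟩

/-- `f` labels the points of `X` by `1, …, n`, and in terms of labels `U` acts by `rot` and `S`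
acts by `s`. -/
structure IsLabelling {X : Type*} [MulAction PSL2Z X] (n : ℕ) (s : ℕ → ℕ) (f : ℕ → X) : Prop where
  bijOn : Set.BijOn f (Finset.Icc 1 n) Set.univ
  Sp_smul : ∀ i ∈ Finset.Icc 1 n, Sp • f i = f (s i)
  Up_smul : ∀ i ∈ Finset.Icc 1 n, Up • f i = f (rot i)

theorem mem_Icc_iff_mem_range' {n i : ℕ} : i ∈ Finset.Icc 1 n ↔ i ∈ List.range' 1 n := by
  rw [Finset.mem_Icc, List.mem_range'_1]
  omega

theorem rot_mem_Icc {n i : ℕ} (hn : 3 ∣ n) (hi : i ∈ Finset.Icc 1 n) : rot i ∈ Finset.Icc 1 n := by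
  rw [Finset.mem_Icc] at *
  unfold rot
  split_ifs <;> omega

theorem rot_rot_rot {i : ℕ} (hi : 1 ≤ i) : rot (rot (rot i)) = i := by
  unfold rot
  split_ifs <;> omega

theorem rot_sub_one {i : ℕ} (hi : i % 3 ≠ 1) (h0 : i ≠ 0) : rot (i - 1) = i := by
  unfold rot
  split_ifs <;> omega

theorem rot_ne_self (i : ℕ) (h0 : i ≠ 0) : rot i ≠ i := by
  unfold rot
  split_ifs <;> omega

theorem IsTable.cuspStep_mem {n : ℕ} {s : ℕ → ℕ} (hs : IsTable n s) {i : ℕ}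
    (hi : i ∈ Finset.Icc 1 n) : cuspStep s i ∈ Finset.Icc 1 n :=
  hs.mapsTo _ (rot_mem_Icc hs.three_dvd hi)

theorem IsTable.cuspStep_iterate_mem {n : ℕ} {s : ℕ → ℕ} (hs : IsTable n s) {i : ℕ}
    (hi : i ∈ Finset.Icc 1 n) (k : ℕ) : (cuspStep s)^[k] i ∈ Finset.Icc 1 n := by
  have h : Set.MapsTo (cuspStep s) (Finset.Icc 1 n) (Finset.Icc 1 n) :=
    fun _ hj => hs.cuspStep_mem hj
  exact h.iterate k hi

theorem IsTable.induction {n : ℕ} {s : ℕ → ℕ} (hs : IsTable n s) {P : ℕ → Prop} (h1 : P 1)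
    (hrot : ∀ i ∈ Finset.Icc 1 n, P i → P (rot i)) (hS : ∀ i ∈ Finset.Icc 1 n, P i → P (s i))
    {i : ℕ} (hi : i ∈ Finset.Icc 1 n) : P i := by
  induction i using Nat.strong_induction_on with
  | _ i ih =>
    obtain ⟨hi1, hin⟩ := Finset.mem_Icc.1 hi
    by_cases h : i = 1
    · exact h ▸ h1
    by_cases h3 : i % 3 = 1
    · have hsi := hs.mapsTo i hi
      exact hs.involutive i hi ▸ hS _ hsi (ih _ (hs.lt i hi h3 h) hsi)
    · have hi' : i - 1 ∈ Finset.Icc 1 n := Finset.mem_Icc.2 (by omega)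
      exact rot_sub_one h3 (by omega) ▸ hrot _ hi' (ih _ (by omega) hi')

section IsLabelling

variable {X : Type*} [MulAction PSL2Z X] {n : ℕ} {s : ℕ → ℕ} {f : ℕ → X}

theorem IsLabelling.exists_eq (hf : IsLabelling n s f) (x : X) : ∃ i ∈ Finset.Icc 1 n, f i = x :=
  hf.bijOn.surjOn (Set.mem_univ x)

theorem IsLabelling.natCard_eq (hf : IsLabelling n s f) : Nat.card X = n := by
  rw [← Nat.card_congr (hf.bijOn.equiv.trans (Equiv.Set.univ X))]
  simp

theorem IsLabelling.Tp_smul (hf : IsLabelling n s f) (hs : IsTable n s) {i : ℕ}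
    (hi : i ∈ Finset.Icc 1 n) : Tp • f i = f (cuspStep s i) := by
  rw [← Sp_mul_Up, mul_smul, hf.Up_smul i hi, hf.Sp_smul _ (rot_mem_Icc hs.three_dvd hi),
    cuspStep]

theorem IsLabelling.Tp_pow_smul (hf : IsLabelling n s f) (hs : IsTable n s) {i : ℕ}
    (hi : i ∈ Finset.Icc 1 n) (k : ℕ) : Tp ^ k • f i = f ((cuspStep s)^[k] i) := by
  induction k with
  | zero => rw [pow_zero, one_smul, Function.iterate_zero_apply]
  | succ k ih =>
    rw [pow_succ', mul_smul, ih, hf.Tp_smul hs (hs.cuspStep_iterate_mem hi k),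
      Function.iterate_succ_apply']

theorem IsLabelling.Sp_smul_ne (hf : IsLabelling n s f) (hs : IsTable n s) (x : X) :
    Sp • x ≠ x := by
  obtain ⟨i, hi, rfl⟩ := hf.exists_eq x
  rw [hf.Sp_smul i hi]
  exact fun h => hs.ne i hi (hf.bijOn.injOn (hs.mapsTo i hi) hi h)

theorem IsLabelling.Up_smul_ne (hf : IsLabelling n s f) (hs : IsTable n s) (x : X) :
    Up • x ≠ x := by
  obtain ⟨i, hi, rfl⟩ := hf.exists_eq x
  rw [hf.Up_smul i hi]
  exact fun h => rot_ne_self i (Nat.one_le_iff_ne_zero.1 (Finset.mem_Icc.1 hi).1)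
    (hf.bijOn.injOn (rot_mem_Icc hs.three_dvd hi) hi h)

theorem IsLabelling.isPretransitive (hf : IsLabelling n s f) (hs : IsTable n s) :
    IsPretransitive PSL2Z X := by
  refine IsPretransitive.of_orbit (x₀ := f 1) fun x => ?_
  obtain ⟨i, hi, rfl⟩ := hf.exists_eq x
  refine hs.induction (P := fun i => ∃ g : PSL2Z, g • f 1 = f i) ⟨1, one_smul _ _⟩ ?_ ?_ hi
  · rintro i hi ⟨g, hg⟩
    exact ⟨Up * g, by rw [mul_smul, hg, hf.Up_smul i hi]⟩
  · rintro i hi ⟨g, hg⟩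
    exact ⟨Sp * g, by rw [mul_smul, hg, hf.Sp_smul i hi]⟩

end IsLabelling

/-- The number of cycles of `cuspStep s` on the labels `1, …, n`, each counted at its least
label. -/
def cusps (n : ℕ) (s : ℕ → ℕ) : ℕ :=
  (List.range' 1 n).countP fun i => (List.iterate (cuspStep s) i n).all (i ≤ ·)

theorem IsLabelling.card_orbitRel_zpowers_Tp {X : Type*} [MulAction PSL2Z X] {n : ℕ} {s : ℕ → ℕ}
    {f : ℕ → X} (hf : IsLabelling n s f) (hs : IsTable n s) (hn : n ≠ 0) :
    Nat.card (orbitRel.Quotient (Subgroup.zpowers Tp) X) = cusps n s := by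
  have : Finite X := Nat.finite_of_card_ne_zero (hf.natCard_eq.trans_ne hn)
  have horb {i j : ℕ} (hi : i ∈ Finset.Icc 1 n) (hj : j ∈ Finset.Icc 1 n) :
      orbitRel (Subgroup.zpowers Tp) X (f i) (f j) ↔ ∃ k < n, (cuspStep s)^[k] i = j := by
    rw [Setoid.comm', orbitRel_apply, mem_orbit_zpowers_iff_exists_lt, hf.natCard_eq]
    refine exists_congr fun k => and_congr_right fun _ => ?_
    rw [hf.Tp_pow_smul hs hi, hf.bijOn.injOn.eq_iff (hs.cuspStep_iterate_mem hi k) hj]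
  rw [orbitRel.Quotient, card_quotient_eq_ncard_of_surjOn _ hf.bijOn.surjOn, cusps,
    List.countP_eq_length_filter,
    ← List.toFinset_card_of_nodup (List.Nodup.filter _ List.nodup_range'), ← Set.ncard_coe_finset]
  congr 1
  ext i
  rw [Finset.mem_coe, List.mem_toFinset, List.mem_filter, ← mem_Icc_iff_mem_range']
  refine and_congr_right fun hi => ?_
  simp only [List.all_eq_true, decide_eq_true_eq, List.mem_iterate]
  refine ⟨?_, ?_⟩
  · rintro h _ ⟨k, hk, rfl⟩
    have hj := hs.cuspStep_iterate_mem hi k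
    exact h _ hj ((horb hi hj).2 ⟨k, hk, rfl⟩)
  · intro h j hj hij
    obtain ⟨k, hk, rfl⟩ := (horb hi hj).1 hij
    exact h _ ⟨k, hk, rfl⟩

theorem exists_isLabelling_of_isPretransitive {X : Type*} [MulAction PSL2Z X]
    [IsPretransitive PSL2Z X] (x : X) {n : ℕ} {s : ℕ → ℕ} {f : ℕ → X} (hf : IsLabelling n s f) :
    ∃ (Γ : Subgroup PSL2Z) (f' : ℕ → PSL2Z ⧸ Γ), IsLabelling n s f' := by
  have hsurj : Function.Surjective (ofQuotientStabilizer PSL2Z x) := fun y => by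
    obtain ⟨g, hg⟩ := exists_smul_eq PSL2Z x y
    exact ⟨g, hg⟩
  let e := Equiv.ofBijective _ ⟨injective_ofQuotientStabilizer PSL2Z x, hsurj⟩
  have he (g : PSL2Z) (y : X) : e.symm (g • y) = g • e.symm y := by
    rw [Equiv.symm_apply_eq]
    refine Eq.trans ?_ (ofQuotientStabilizer_smul PSL2Z x g (e.symm y)).symm
    exact congrArg (g • ·) (e.apply_symm_apply y).symm
  refine ⟨stabilizer PSL2Z x, e.symm ∘ f, e.symm.bijective.bijOn_univ.comp hf.bijOn, ?_, ?_⟩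
  · exact fun i hi => (he _ _).symm.trans (congrArg e.symm (hf.Sp_smul i hi))
  · exact fun i hi => (he _ _).symm.trans (congrArg e.symm (hf.Up_smul i hi))

theorem IsTable.exists_isLabelling {n : ℕ} {s : ℕ → ℕ} (hs : IsTable n s) (hn : n ≠ 0) :
    ∃ (Γ : Subgroup PSL2Z) (f : ℕ → PSL2Z ⧸ Γ), IsLabelling n s f := by
  let σ : Equiv.Perm (Finset.Icc 1 n) := Function.Involutive.toPerm
    (fun i => ⟨s i, hs.mapsTo i i.2⟩) fun i => Subtype.ext (hs.involutive i i.2)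
  let υ : Equiv.Perm (Finset.Icc 1 n) :=
    { toFun i := ⟨rot i, rot_mem_Icc hs.three_dvd i.2⟩
      invFun i := ⟨rot (rot i), rot_mem_Icc hs.three_dvd (rot_mem_Icc hs.three_dvd i.2)⟩
      left_inv i := Subtype.ext (rot_rot_rot (Finset.mem_Icc.1 i.2).1)
      right_inv i := Subtype.ext (rot_rot_rot (Finset.mem_Icc.1 i.2).1) }
  obtain ⟨φ, hφS, hφU⟩ := exists_monoidHom_map_Sp_map_Up (s := σ) (u := υ)
    (Equiv.ext fun i => σ.symm_apply_apply i) (Equiv.ext fun i => υ.symm_apply_apply i)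
  let _ : MulAction PSL2Z (Finset.Icc 1 n) := MulAction.compHom _ φ
  have hS (i : Finset.Icc 1 n) : Sp • i = σ i := congrArg (· i) hφS
  have hU (i : Finset.Icc 1 n) : Up • i = υ i := congrArg (· i) hφU
  let one : Finset.Icc 1 n := ⟨1, Finset.mem_Icc.2 (by omega)⟩
  let f (i : ℕ) : Finset.Icc 1 n := if hi : i ∈ Finset.Icc 1 n then ⟨i, hi⟩ else one
  have hf {i : ℕ} (hi : i ∈ Finset.Icc 1 n) : f i = ⟨i, hi⟩ := dif_pos hi
  have hlab : IsLabelling n s f := by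
    refine ⟨⟨Set.mapsTo_univ _ _, fun i hi j hj h => ?_, fun i _ => ⟨i, i.2, hf i.2⟩⟩,
      fun i hi => ?_, fun i hi => ?_⟩
    · rw [hf hi, hf hj] at h
      exact congrArg Subtype.val h
    · rw [hf hi, hf (hs.mapsTo i hi), hS]
      rfl
    · rw [hf hi, hf (rot_mem_Icc hs.three_dvd hi), hU]
      rfl
  have := hlab.isPretransitive hs
  exact exists_isLabelling_of_isPretransitive one hlab

/-! ### Deciding conjugacy -/

/-- The label of the image of the point labelled `i` under the equivariant map that sends the point
labelled `1` to the point labelled `x`, where `S` acts by `l` on the source and by `m` on the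
target. It is computed by tracing `i` back to `1`, in at most `k` steps. -/
def transport (l m : ℕ → ℕ) (x : ℕ) : ℕ → ℕ → ℕ
  | 0, _ => x
  | k + 1, i =>
    if i = 1 then x
    else if i % 3 = 1 then m (transport l m x k (l i))
    else rot (transport l m x k (i - 1))

/-- Whether the actions described by `l` and `m` are isomorphic. -/
def isIso (n : ℕ) (l m : ℕ → ℕ) : Bool :=
  (List.range' 1 n).any fun x =>
    ((List.range' 1 n).all fun i =>
      transport l m x n (cuspStep l i) == cuspStep m (transport l m x n i)) &&
    (List.range' 1 n).all fun i => transport l m x n (rot i) == rot (transport l m x n i)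

theorem isIso_iff {n : ℕ} {l m : ℕ → ℕ} : isIso n l m ↔ ∃ x ∈ Finset.Icc 1 n,
    (∀ i ∈ Finset.Icc 1 n, transport l m x n (cuspStep l i) = cuspStep m (transport l m x n i)) ∧
    ∀ i ∈ Finset.Icc 1 n, transport l m x n (rot i) = rot (transport l m x n i) := by
  simp only [isIso, List.any_eq_true, Bool.and_eq_true, List.all_eq_true, beq_iff_eq,
    mem_Icc_iff_mem_range']

theorem transport_mem_Icc {n : ℕ} {l m : ℕ → ℕ} (hm : IsTable n m) {x : ℕ}
    (hx : x ∈ Finset.Icc 1 n) (k i : ℕ) : transport l m x k i ∈ Finset.Icc 1 n := by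
  fun_induction transport l m x k i with
  | case1 => exact hx
  | case2 => exact hx
  | case3 _ _ _ _ ih => exact hm.mapsTo _ ih
  | case4 _ _ _ _ ih => exact rot_mem_Icc hm.three_dvd ih

section

variable {X Y : Type*} [MulAction PSL2Z X] [MulAction PSL2Z Y] {n : ℕ} {l m : ℕ → ℕ}
  {f : ℕ → X} {g : ℕ → Y}

theorem IsLabelling.apply_transport (hl : IsTable n l) (hf : IsLabelling n l f)
    (hm : IsTable n m) (hg : IsLabelling n m g) (φ : X →[PSL2Z] Y) {x : ℕ}
    (hx : x ∈ Finset.Icc 1 n) (hφ : φ (f 1) = g x) (k i : ℕ) (hik : i ≤ k)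
    (hi : i ∈ Finset.Icc 1 n) : g (transport l m x k i) = φ (f i) := by
  fun_induction transport l m x k i with
  | case1 =>
    rw [Finset.mem_Icc] at hi
    omega
  | case2 => exact hφ.symm
  | case3 k i h1 h3 ih =>
    have hli := hl.mapsTo i hi
    have hlt := hl.lt i hi h3 h1
    rw [← hg.Sp_smul _ (transport_mem_Icc hm hx _ _), ih (by omega) hli, ← map_smul,
      hf.Sp_smul _ hli, hl.involutive i hi]
  | case4 k i h1 h3 ih =>
    have hi' : i - 1 ∈ Finset.Icc 1 n := by
      rw [Finset.mem_Icc] at *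
      omega
    rw [← hg.Up_smul _ (transport_mem_Icc hm hx _ _), ih (by omega) hi', ← map_smul,
      hf.Up_smul _ hi', rot_sub_one h3 (Nat.one_le_iff_ne_zero.1 (Finset.mem_Icc.1 hi).1)]

theorem IsLabelling.isIso_of_mulActionHom (hl : IsTable n l) (hf : IsLabelling n l f)
    (hm : IsTable n m) (hg : IsLabelling n m g) (φ : X →[PSL2Z] Y) : isIso n l m := by
  obtain ⟨x, hx, hφ⟩ := hg.exists_eq (φ (f 1))
  have h {i : ℕ} (hi : i ∈ Finset.Icc 1 n) : g (transport l m x n i) = φ (f i) :=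
    hf.apply_transport hl hm hg φ hx hφ.symm n i (Finset.mem_Icc.1 hi).2 hi
  have hmem (i : ℕ) := transport_mem_Icc (l := l) hm hx n i
  refine isIso_iff.2 ⟨x, hx, fun i hi => ?_, fun i hi => ?_⟩
  · refine hg.bijOn.injOn (hmem _) (hm.cuspStep_mem (hmem i)) ?_
    rw [h (hl.cuspStep_mem hi), ← hf.Tp_smul hl hi, map_smul, ← h hi,
      hg.Tp_smul hm (hmem i)]
  · refine hg.bijOn.injOn (hmem _) (rot_mem_Icc hm.three_dvd (hmem i)) ?_
    rw [h (rot_mem_Icc hl.three_dvd hi), ← hf.Up_smul i hi, map_smul, ← h hi,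
      hg.Up_smul _ (hmem i)]

theorem IsLabelling.nonempty_mulActionHom_of_isIso (hl : IsTable n l) (hf : IsLabelling n l f)
    (hm : IsTable n m) (hg : IsLabelling n m g) (h : isIso n l m) : Nonempty (X →[PSL2Z] Y) := by
  obtain ⟨x, hx, hT, hU⟩ := isIso_iff.1 h
  have hmem (i : ℕ) := transport_mem_Icc (l := l) hm hx n i
  let φ (y : X) : Y := g (transport l m x n (Function.invFunOn f (Finset.Icc 1 n) y))
  have hφ {i : ℕ} (hi : i ∈ Finset.Icc 1 n) : φ (f i) = g (transport l m x n i) :=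
    congrArg (fun j => g (transport l m x n j)) (hf.bijOn.invOn_invFunOn.1 hi)
  have hφU (y : X) : φ (Up • y) = Up • φ y := by
    obtain ⟨i, hi, rfl⟩ := hf.exists_eq y
    rw [hf.Up_smul i hi, hφ (rot_mem_Icc hl.three_dvd hi), hU i hi, hφ hi, hg.Up_smul _ (hmem i)]
  have hφT (y : X) : φ (Tp • y) = Tp • φ y := by
    obtain ⟨i, hi, rfl⟩ := hf.exists_eq y
    rw [hf.Tp_smul hl hi, hφ (hl.cuspStep_mem hi), hφ hi, hg.Tp_smul hm (hmem i),
      hT i hi]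
  have hS : Sp = Tp * (Up * Up) := by
    rw [← Sp_mul_Up, mul_assoc, ← sq, ← pow_succ', Up_cube, mul_one]
  have hφS (y : X) : φ (Sp • y) = Sp • φ y := by
    simp only [hS, mul_smul, hφT, hφU]
  refine ⟨⟨φ, map_smul_of_mclosure_eq_top mclosure_Sp_Up ?_⟩⟩
  rintro _ (rfl | rfl)
  exacts [hφS, hφU]

end

theorem subgroupConj_iff_isIso {Γ Δ : Subgroup PSL2Z} {n : ℕ} {l m : ℕ → ℕ} {f : ℕ → PSL2Z ⧸ Γ}
    {g : ℕ → PSL2Z ⧸ Δ} (hn : n ≠ 0) (hl : IsTable n l) (hf : IsLabelling n l f)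
    (hm : IsTable n m) (hg : IsLabelling n m g) : SubgroupConj Γ Δ ↔ isIso n l m := by
  have hΓ : Γ.index = n := hf.natCard_eq
  have hΔ : Δ.index = n := hg.natCard_eq
  rw [subgroupConj_iff_nonempty_mulActionHom (hΓ.trans_ne hn) (hΓ.trans hΔ.symm)]
  exact ⟨fun ⟨φ⟩ => hf.isIso_of_mulActionHom hl hm hg φ,
    hf.nonempty_mulActionHom_of_isIso hl hm hg⟩

/-! ### Enumerating the labelled actions -/

/-- The digit of index `i` of `t` in base 32. A partial involution of the labels `1, …, 31` is
encoded by the number `t` whose digit of index `i` is the label matched with `i`, or `0` if `i` is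
unmatched. -/
def entry (t i : ℕ) : ℕ := t / 32 ^ i % 32

/-- The code `t` with the labels `p` and `q` matched. -/
def linkCode (p q t : ℕ) : ℕ := t + q * 32 ^ p + p * 32 ^ q

/-- The pairs of a number of labels and a code obtained from `c` by deciding where `S` sends the
label `i`: to the first label of a new cycle of `rot`, as long as there are at most `N` labels, or
to a larger unmatched label. There is none if all labels of `c` are smaller than `i`. -/
def branches (N i : ℕ) (c : ℕ × ℕ) : List (ℕ × ℕ) :=
  if c.1 < i then []
  else if entry c.2 i ≠ 0 then [c]
  else (if c.1 < N then [(c.1 + 3, linkCode i (c.1 + 1) c.2)] else []) ++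
    ((List.range' (i + 1) (c.1 - i)).filter (entry c.2 · == 0)).map fun q => (c.1, linkCode i q c.2)

/-- The pairs of a number of labels, at most `N`, and a code that matches the labels `1, …, k`,
obtained by deciding successively where `S` sends them. -/
def tables (N : ℕ) : ℕ → List (ℕ × ℕ)
  | 0 => [(3, 0)]
  | k + 1 => (tables N k).flatMap (branches N (k + 1))

/-- Whether the cycle of `cuspStep s` containing the label `1` has length at most `3` and no cycle
on the labels `1, …, n` is shorter. -/
def hasShortestCusp (n : ℕ) (s : ℕ → ℕ) : Bool :=
  [1, 2, 3].any fun w => (cuspStep s)^[w] 1 == 1 &&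
    (List.range' 1 (w - 1)).all fun v => (List.range' 1 n).all fun i => (cuspStep s)^[v] i != i

/-- The codes of the actions on `n` points with `c` cusps, based at a point of a shortest cusp. -/
def cuspTables (n c : ℕ) : List ℕ :=
  ((tables n n).map Prod.snd).filter fun t =>
    hasShortestCusp n (entry t) && (cusps n (entry t) == c && decide (IsTable n (entry t)))

/-- Codes of representatives of the isomorphism classes of actions in `cuspTables n c`. -/
def representatives (n c : ℕ) : List ℕ :=
  (cuspTables n c).pwFilter fun t u => ¬ isIso n (entry t) (entry u)

theorem entry_zero (i : ℕ) : entry 0 i = 0 := by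
  rw [entry, Nat.zero_div]

theorem entry_succ (t i : ℕ) : entry t (i + 1) = entry (t / 32) i := by
  rw [entry, entry, pow_succ', Nat.div_div_eq_div_mul]

theorem entry_add_mul_pow {t p q : ℕ} (hp : entry t p = 0) (hq : q < 32) :
    entry (t + q * 32 ^ p) = Function.update (entry t) p q := by
  induction p generalizing t with
  | zero =>
    have hp : t % 32 = 0 := by simpa only [entry, pow_zero, Nat.div_one] using hp
    ext (_ | i)
    · rw [Function.update_self, entry, pow_zero, Nat.div_one]
      omega
    · rw [Function.update_of_ne i.succ_ne_zero, entry_succ, entry_succ, pow_zero]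
      congr 1
      omega
  | succ p ih =>
    rw [entry_succ] at hp
    have hpow : q * 32 ^ (p + 1) = 32 * (q * 32 ^ p) := by ring
    have hdiv : (t + q * 32 ^ (p + 1)) / 32 = t / 32 + q * 32 ^ p := by omega
    ext (_ | i)
    · rw [Function.update_of_ne p.succ_ne_zero.symm, entry, entry, pow_zero, Nat.div_one,
        Nat.div_one]
      omega
    · simp only [entry_succ, hdiv, ih hp, Function.update_apply, Nat.add_right_cancel_iff]

theorem entry_linkCode {t p q : ℕ} (hp : entry t p = 0) (hq : entry t q = 0) (hpq : p ≠ q)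
    (hp' : p < 32) (hq' : q < 32) :
    entry (linkCode p q t) = Function.update (Function.update (entry t) p q) q p := by
  have hq : entry (t + q * 32 ^ p) q = 0 := by
    rw [entry_add_mul_pow hp hq', Function.update_of_ne hpq.symm, hq]
  rw [linkCode, entry_add_mul_pow hq hp', entry_add_mul_pow hp hq']

/-! ### Completeness of the enumeration -/

/-- `f` labels some of the points of `X` by `1, …, n`; in terms of labels `U` acts by `rot`, and `S`
acts by `s` except that `s i = 0` if it has not been decided where `S` sends the label `i`. -/
structure IsPartialLabelling {X : Type*} [MulAction PSL2Z X] (n : ℕ) (s : ℕ → ℕ) (f : ℕ → X) :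
    Prop where
  three_dvd : 3 ∣ n
  injOn : Set.InjOn f (Finset.Icc 1 n)
  Up_smul : ∀ i ∈ Finset.Icc 1 n, Up • f i = f (rot i)
  Sp_smul : ∀ i ∈ Finset.Icc 1 n, s i ≠ 0 → Sp • f i = f (s i)
  mapsTo : ∀ i ∈ Finset.Icc 1 n, s i ≠ 0 → s i ∈ Finset.Icc 1 n
  involutive : ∀ i ∈ Finset.Icc 1 n, s i ≠ 0 → s (s i) = i
  eq_zero : ∀ i, n < i → s i = 0

/-- The labelling `f` extended from `1, …, n` by giving the labels `n + 1, n + 2, n + 3` to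
`y, U • y, U ^ 2 • y`. -/
def extendLabelling {X : Type*} [MulAction PSL2Z X] (n : ℕ) (f : ℕ → X) (y : X) (i : ℕ) : X :=
  if i ≤ n then f i else Up ^ (i - n - 1) • y

section IsPartialLabelling

variable {X : Type*} [MulAction PSL2Z X] {n : ℕ} {s : ℕ → ℕ} {f : ℕ → X}

theorem extendLabelling_of_le {y : X} {i : ℕ} (hi : i ≤ n) : extendLabelling n f y i = f i :=
  if_pos hi

theorem extendLabelling_add {y : X} (k : ℕ) :
    extendLabelling n f y (n + 1 + k) = Up ^ k • y := by
  rw [extendLabelling, if_neg (by omega)]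
  congr 2
  omega

theorem IsPartialLabelling.link (h : IsPartialLabelling n s f) {p q : ℕ} (hp : p ∈ Finset.Icc 1 n)
    (hq : q ∈ Finset.Icc 1 n) (hpq : p ≠ q) (hsp : s p = 0) (hsq : s q = 0)
    (hS : Sp • f p = f q) :
    IsPartialLabelling n (Function.update (Function.update s p q) q p) f := by
  have hS' : Sp • f q = f p := by rw [← hS, Sp_smul_Sp_smul]
  have hne {i : ℕ} (hi : i ∈ Finset.Icc 1 n) (hsi : s i ≠ 0) : s i ≠ p ∧ s i ≠ q := by
    have := h.involutive i hi hsi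
    refine ⟨?_, ?_⟩ <;> rintro rfl <;> grind
  have : p ≠ 0 ∧ q ≠ 0 := by grind
  refine ⟨h.three_dvd, h.injOn, h.Up_smul, fun i hi => ?_, fun i hi => ?_, fun i hi => ?_,
    fun i hi => ?_⟩
  · have := h.Sp_smul i hi
    grind
  · have := h.mapsTo i hi
    grind
  · have := h.involutive i hi
    have := @hne i hi
    grind
  · have := h.eq_zero i hi
    grind

theorem IsPartialLabelling.Up_smul_mem_image_iff (h : IsPartialLabelling n s f) {x : X} :
    Up • x ∈ f '' Finset.Icc 1 n ↔ x ∈ f '' Finset.Icc 1 n := by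
  have hU {x : X} : x ∈ f '' Finset.Icc 1 n → Up • x ∈ f '' Finset.Icc 1 n := by
    rintro ⟨i, hi, rfl⟩
    exact ⟨rot i, rot_mem_Icc h.three_dvd hi, (h.Up_smul i hi).symm⟩
  exact ⟨fun hx => Up_smul_Up_smul_Up_smul x ▸ hU (hU hx), hU⟩

theorem IsPartialLabelling.Up_pow_smul_mem_image_iff (h : IsPartialLabelling n s f) {x : X}
    (k : ℕ) : Up ^ k • x ∈ f '' Finset.Icc 1 n ↔ x ∈ f '' Finset.Icc 1 n := by
  induction k with
  | zero => rw [pow_zero, one_smul]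
  | succ k ih => rw [pow_succ', mul_smul, h.Up_smul_mem_image_iff, ih]

theorem IsPartialLabelling.extend (h : IsPartialLabelling n s f) (hU : ∀ x : X, Up • x ≠ x)
    {y : X} (hy : y ∉ f '' Finset.Icc 1 n) :
    IsPartialLabelling (n + 3) s (extendLabelling n f y) := by
  have hcases {i : ℕ} (hi : i ∈ Finset.Icc 1 (n + 3)) :
      i ∈ Finset.Icc 1 n ∨ ∃ k < 3, i = n + 1 + k := by
    rw [Finset.mem_Icc] at *
    rcases le_or_gt i n with hin | hin
    · exact Or.inl ⟨hi.1, hin⟩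
    · exact Or.inr ⟨i - n - 1, by omega⟩
  have hold {i : ℕ} (hi : i ∈ Finset.Icc 1 n) : extendLabelling n f y i = f i :=
    extendLabelling_of_le (Finset.mem_Icc.1 hi).2
  have hle : Finset.Icc 1 n ⊆ Finset.Icc 1 (n + 3) := Finset.Icc_subset_Icc_right (by omega)
  have hmem {i : ℕ} (hi : i ∈ Finset.Icc 1 (n + 3)) (hsi : s i ≠ 0) : i ∈ Finset.Icc 1 n :=
    Finset.mem_Icc.2 ⟨(Finset.mem_Icc.1 hi).1, not_lt.1 (mt (h.eq_zero i) hsi)⟩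
  have hnew (k : ℕ) : Up ^ k • y ∉ f '' Finset.Icc 1 n := by rwa [h.Up_pow_smul_mem_image_iff]
  refine ⟨h.three_dvd.add (dvd_refl 3), ?_, ?_, fun i hi hsi => ?_,
    fun i hi hsi => hle (h.mapsTo i (hmem hi hsi) hsi),
    fun i hi hsi => h.involutive i (hmem hi hsi) hsi, fun i hi => h.eq_zero i (by omega)⟩
  · intro i hi j hj hij
    rcases hcases hi with hi | ⟨a, ha, rfl⟩ <;> rcases hcases hj with hj | ⟨b, hb, rfl⟩
    · rw [hold hi, hold hj] at hij
      exact h.injOn hi hj hij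
    · rw [hold hi, extendLabelling_add] at hij
      exact absurd ⟨i, hi, hij⟩ (hnew b)
    · rw [hold hj, extendLabelling_add] at hij
      exact absurd ⟨j, hj, hij.symm⟩ (hnew a)
    · rw [extendLabelling_add, extendLabelling_add] at hij
      rw [injOn_Up_pow_smul hU y ha hb hij]
  · intro i hi
    rcases hcases hi with hi | ⟨k, hk, rfl⟩
    · rw [hold hi, hold (rot_mem_Icc h.three_dvd hi), h.Up_smul i hi]
    · have hn := h.three_dvd
      have hrot : rot (n + 1 + k) = n + 1 + (k + 1) % 3 := by
        unfold rot
        split_ifs <;> omega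
      rw [hrot, extendLabelling_add, extendLabelling_add, ← mul_smul, ← pow_succ',
        ← pow_mod_orderOf, orderOf_Up]
  · rw [hold (hmem hi hsi), hold (h.mapsTo i (hmem hi hsi) hsi), h.Sp_smul i (hmem hi hsi) hsi]

theorem IsPartialLabelling.le_card [Finite X] (h : IsPartialLabelling n s f) : n ≤ Nat.card X := by
  have := Set.ncard_le_card (f '' Finset.Icc 1 n)
  rwa [h.injOn.ncard_image, Set.ncard_coe_finset, Nat.card_Icc,
    Nat.add_sub_cancel] at this

theorem IsPartialLabelling.exists_eq_zero (h : IsPartialLabelling n s f) {p : ℕ}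
    (hp : p ∈ Finset.Icc 1 n) (hsp : s p = 0) (hS : Sp • f p ∈ f '' Finset.Icc 1 n) :
    ∃ q ∈ Finset.Icc 1 n, s q = 0 ∧ Sp • f p = f q := by
  obtain ⟨q, hq, hqS⟩ := hS
  refine ⟨q, hq, ?_, hqS.symm⟩
  by_contra hsq
  have hqp : f (s q) = f p := by rw [← h.Sp_smul q hq hsq, hqS, Sp_smul_Sp_smul]
  have hinv := h.involutive q hq hsq
  rw [h.injOn (h.mapsTo q hq hsq) hp hqp, hsp] at hinv
  rw [Finset.mem_coe, Finset.mem_Icc] at hq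
  omega

theorem IsPartialLabelling.image_eq_univ [IsPretransitive PSL2Z X] (h : IsPartialLabelling n s f)
    (hn : n ≠ 0) (hs : ∀ i ∈ Finset.Icc 1 n, s i ≠ 0) : f '' Finset.Icc 1 n = Set.univ := by
  have hgen : ∀ g ∈ ({Sp, Up} : Set PSL2Z), ∀ x ∈ f '' Finset.Icc 1 n,
      g • x ∈ f '' Finset.Icc 1 n := by
    rintro _ (rfl | rfl) _ ⟨i, hi, rfl⟩
    · exact ⟨s i, h.mapsTo i hi (hs i hi), (h.Sp_smul i hi (hs i hi)).symm⟩
    · exact ⟨rot i, rot_mem_Icc h.three_dvd hi, (h.Up_smul i hi).symm⟩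
  have hone : 1 ∈ Finset.Icc 1 n := Finset.mem_Icc.2 (by omega)
  refine Set.eq_univ_of_forall fun x => ?_
  obtain ⟨g, rfl⟩ := exists_smul_eq PSL2Z (f 1) x
  exact smul_mem_of_mclosure_eq_top mclosure_Sp_Up hgen g _ ⟨1, hone, rfl⟩

end IsPartialLabelling

/-- A stage of the enumeration: a partial labelling such that the labels `1, …, k` have been
matched, the point `x₀` has the label `1`, and each other cycle of `rot` is entered, at its first
label, from a smaller label. -/
structure IsStage {X : Type*} [MulAction PSL2Z X] (x₀ : X) (k n : ℕ) (s : ℕ → ℕ) (f : ℕ → X) :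
    Prop extends IsPartialLabelling n s f where
  apply_one : f 1 = x₀
  ne_zero : n ≠ 0
  le : k ≤ n
  matched : ∀ i ∈ Finset.Icc 1 k, s i ≠ 0
  rooted : ∀ i ∈ Finset.Icc 1 n, i % 3 = 1 → i ≠ 1 → s i ≠ 0 ∧ s i < i

section IsStage

variable {X : Type*} [MulAction PSL2Z X] {x₀ : X} {k n : ℕ} {s : ℕ → ℕ} {f : ℕ → X}

theorem exists_isStage_zero (hU : ∀ x : X, Up • x ≠ x) (x₀ : X) :
    ∃ f : ℕ → X, IsStage x₀ 0 3 (entry 0) f := by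
  have h : IsPartialLabelling 0 (entry 0) fun _ => x₀ := by
    constructor <;> simp [entry_zero]
  refine ⟨_, h.extend hU (y := x₀) (by simp), ?_, three_ne_zero, Nat.zero_le 3, by simp, ?_⟩
  · rw [extendLabelling, if_neg one_pos.not_ge, Nat.sub_self, pow_zero, one_smul]
  · intro i hi
    rw [Finset.mem_Icc] at hi
    omega

theorem IsStage.link (h : IsStage x₀ k n s f) {q : ℕ} (hk : k + 1 < q) (hq : q ≤ n)
    (hsk : s (k + 1) = 0) (hsq : s q = 0) (hS : Sp • f (k + 1) = f q) :
    IsStage x₀ (k + 1) n (Function.update (Function.update s (k + 1) q) q (k + 1)) f where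
  toIsPartialLabelling := h.toIsPartialLabelling.link (Finset.mem_Icc.2 (by omega))
    (Finset.mem_Icc.2 (by omega)) hk.ne hsk hsq hS
  apply_one := h.apply_one
  ne_zero := h.ne_zero
  le := by omega
  matched i hi := by
    have := h.matched i
    grind
  rooted i hi := by
    have := h.rooted i hi
    grind

theorem IsStage.extend_link (h : IsStage x₀ k n s f) (hU : ∀ x : X, Up • x ≠ x) (hk : k < n)
    (hsk : s (k + 1) = 0) (hS : Sp • f (k + 1) ∉ f '' Finset.Icc 1 n) :
    IsStage x₀ (k + 1) (n + 3) (Function.update (Function.update s (k + 1) (n + 1)) (n + 1) (k + 1))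
      (extendLabelling n f (Sp • f (k + 1))) where
  toIsPartialLabelling := by
    refine (h.extend hU hS).link (Finset.mem_Icc.2 (by omega)) (Finset.mem_Icc.2 (by omega))
      (by omega) hsk (h.eq_zero _ n.lt_succ_self) ?_
    rw [extendLabelling_of_le hk, ← add_zero (n + 1), extendLabelling_add, pow_zero, one_smul]
  apply_one := (extendLabelling_of_le (Nat.one_le_iff_ne_zero.2 h.ne_zero)).trans h.apply_one
  ne_zero := by omega
  le := by omega
  matched i hi := by
    have := h.matched i
    grind
  rooted i hi := by
    have := h.rooted i
    have := h.three_dvd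
    grind

theorem IsStage.exists_mem_branches [Finite X] (hcard : Nat.card X < 32)
    (hS : ∀ x : X, Sp • x ≠ x) (hU : ∀ x : X, Up • x ≠ x) {c : ℕ × ℕ}
    (h : IsStage x₀ k c.1 (entry c.2) f) (hk : k < c.1) :
    ∃ c' ∈ branches (Nat.card X) (k + 1) c, ∃ f' : ℕ → X,
      IsStage x₀ (k + 1) c'.1 (entry c'.2) f' := by
  obtain ⟨n, t⟩ := c
  dsimp only at h hk
  have hn := h.le_card
  have hk1 : k + 1 ∈ Finset.Icc 1 n := Finset.mem_Icc.2 (by omega)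
  rw [branches, if_neg (by dsimp only; omega)]
  by_cases hsk : entry t (k + 1) ≠ 0
  · refine ⟨(n, t), by simp [hsk], f, h.toIsPartialLabelling, h.apply_one, h.ne_zero, hk,
      fun i hi => ?_, h.rooted⟩
    have := h.matched i
    grind
  rw [if_neg hsk]
  rw [not_not] at hsk
  by_cases hSk : Sp • f (k + 1) ∈ f '' Finset.Icc 1 n
  · obtain ⟨q, hq, hsq, hqS⟩ := h.exists_eq_zero hk1 hsk hSk
    have hqk : q ≠ k + 1 := by
      rintro rfl
      exact hS _ hqS
    have hlt : k + 1 < q := by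
      have := h.matched q
      grind
    have hqn := (Finset.mem_Icc.1 hq).2
    refine ⟨(n, linkCode (k + 1) q t), List.mem_append_right _ (List.mem_map.2 ⟨q, ?_, rfl⟩), f, ?_⟩
    · rw [List.mem_filter, List.mem_range'_1, beq_iff_eq]
      exact ⟨by dsimp only; omega, hsq⟩
    · rw [entry_linkCode hsk hsq hlt.ne (by omega) (by omega)]
      exact h.link hlt hqn hsk hsq hqS
  · have h' := h.extend_link hU hk hsk hSk
    have hn' := h'.le_card
    refine ⟨(n + 3, linkCode (k + 1) (n + 1) t), ?_, extendLabelling n f (Sp • f (k + 1)), ?_⟩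
    · rw [if_pos (by dsimp only; omega)]
      exact List.mem_append_left _ (List.mem_singleton_self _)
    · rwa [entry_linkCode hsk (h.eq_zero _ n.lt_succ_self) (by omega) (by omega) (by omega)]

theorem exists_mem_tables_isStage [Finite X] [IsPretransitive PSL2Z X] (hcard : Nat.card X < 32)
    (hS : ∀ x : X, Sp • x ≠ x) (hU : ∀ x : X, Up • x ≠ x) (x₀ : X) {k : ℕ} (hk : k ≤ Nat.card X) :
    ∃ c ∈ tables (Nat.card X) k, ∃ f : ℕ → X, IsStage x₀ k c.1 (entry c.2) f := by
  induction k with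
  | zero => exact ⟨(3, 0), List.mem_singleton_self _, exists_isStage_zero hU x₀⟩
  | succ k ih =>
    obtain ⟨c, hc, f, h⟩ := ih (by omega)
    have hkc : k < c.1 := by
      refine lt_of_le_of_ne h.le fun hkc => ?_
      have huniv := h.image_eq_univ h.ne_zero (hkc ▸ h.matched)
      have hncard := h.injOn.ncard_image
      rw [huniv, Set.ncard_univ, Set.ncard_coe_finset, Nat.card_Icc] at hncard
      omega
    obtain ⟨c', hc', hf'⟩ := h.exists_mem_branches hcard hS hU hkc
    exact ⟨c', List.mem_flatMap.2 ⟨c, hc, hc'⟩, hf'⟩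

theorem IsStage.isTable (hS : ∀ x : X, Sp • x ≠ x) (h : IsStage x₀ n n s f) : IsTable n s where
  three_dvd := h.three_dvd
  mapsTo i hi := h.mapsTo i hi (h.matched i hi)
  involutive i hi := h.involutive i hi (h.matched i hi)
  ne i hi hsi := hS (f i) (by rw [h.Sp_smul i hi (h.matched i hi), hsi])
  lt i hi h3 h1 := (h.rooted i hi h3 h1).2

theorem IsStage.isLabelling [IsPretransitive PSL2Z X] (h : IsStage x₀ n n s f) :
    IsLabelling n s f where
  bijOn := ⟨Set.mapsTo_univ _ _, h.injOn, (h.image_eq_univ h.ne_zero h.matched).ge⟩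
  Sp_smul i hi := h.Sp_smul i hi (h.matched i hi)
  Up_smul := h.Up_smul

theorem exists_mem_tables_isLabelling [Finite X] [IsPretransitive PSL2Z X]
    (hcard : Nat.card X < 32) (hS : ∀ x : X, Sp • x ≠ x) (hU : ∀ x : X, Up • x ≠ x) (x₀ : X) :
    ∃ t, (Nat.card X, t) ∈ tables (Nat.card X) (Nat.card X) ∧ IsTable (Nat.card X) (entry t) ∧
      ∃ f : ℕ → X, IsLabelling (Nat.card X) (entry t) f ∧ f 1 = x₀ := by
  obtain ⟨⟨n, t⟩, hc, f, h⟩ := exists_mem_tables_isStage hcard hS hU x₀ le_rfl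
  obtain rfl : n = Nat.card X := h.le_card.antisymm h.le
  exact ⟨t, hc, h.isTable hS, f, h.isLabelling, h.apply_one⟩

end IsStage

/-! ### Short cusps -/

theorem exists_minimalPeriod_lt_of_card_lt {G X : Type*} [Group G] [MulAction G X] [Finite X]
    (g : G) {k : ℕ} (h : Nat.card X < k * Nat.card (orbitRel.Quotient (Subgroup.zpowers g) X)) :
    ∃ x : X, Function.minimalPeriod (g • ·) x < k := by
  by_contra! hk
  have := Fintype.ofFinite X
  have := Fintype.ofFinite (orbitRel.Quotient (Subgroup.zpowers g) X)
  refine h.not_ge ?_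
  rw [Nat.card_congr (selfEquivSigmaOrbits (Subgroup.zpowers g) X), Nat.card_sigma, mul_comm,
    Nat.card_eq_fintype_card, ← smul_eq_mul]
  refine Finset.card_nsmul_le_sum _ _ _ fun ω _ => ?_
  have := Fintype.ofFinite (orbit (Subgroup.zpowers g) ω.out)
  rw [Nat.card_eq_fintype_card, ← minimalPeriod_eq_card]
  exact hk ω.out

theorem IsLabelling.hasShortestCusp {X : Type*} [MulAction PSL2Z X] {n : ℕ} {s : ℕ → ℕ}
    {f : ℕ → X} (hf : IsLabelling n s f) (hs : IsTable n s) (hn : n ≠ 0)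
    (hlt : Function.minimalPeriod (Tp • ·) (f 1) < 4)
    (hmin : ∀ x : X, Function.minimalPeriod (Tp • ·) (f 1) ≤ Function.minimalPeriod (Tp • ·) x) :
    hasShortestCusp n s := by
  have : Finite X := Nat.finite_of_card_ne_zero (hf.natCard_eq.trans_ne hn)
  have hperiod {i : ℕ} (hi : i ∈ Finset.Icc 1 n) (k : ℕ) :
      Function.IsPeriodicPt (Tp • ·) k (f i) ↔ (cuspStep s)^[k] i = i := by
    rw [Function.IsPeriodicPt, Function.IsFixedPt, smul_iterate_apply, hf.Tp_pow_smul hs hi,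
      hf.bijOn.injOn.eq_iff (hs.cuspStep_iterate_mem hi k) hi]
  have h1 : 1 ∈ Finset.Icc 1 n := Finset.mem_Icc.2 ⟨le_rfl, Nat.one_le_iff_ne_zero.2 hn⟩
  have := Fintype.ofFinite (orbit (Subgroup.zpowers Tp) (f 1))
  have hpos : 0 < Function.minimalPeriod (Tp • ·) (f 1) := Nat.pos_of_neZero _
  simp only [_root_.hasShortestCusp, List.any_eq_true, Bool.and_eq_true, List.all_eq_true,
    beq_iff_eq, bne_iff_ne, ← mem_Icc_iff_mem_range', Finset.mem_Icc (b := n)]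
  refine ⟨Function.minimalPeriod (Tp • ·) (f 1), ?_,
    (hperiod h1 _).1 (Function.isPeriodicPt_minimalPeriod _ _), fun v hv i hi h => ?_⟩
  · interval_cases Function.minimalPeriod (Tp • ·) (f 1) <;> simp
  · rw [Finset.mem_Icc] at hv
    have := ((hperiod (Finset.mem_Icc.2 hi) v).2 h).minimalPeriod_le (by omega)
    have := hmin (f i)
    omega

/-! ### The classification -/

theorem mem_cuspTables {n c t : ℕ} : t ∈ cuspTables n c ↔ (∃ k, (k, t) ∈ tables n n) ∧
    hasShortestCusp n (entry t) ∧ cusps n (entry t) = c ∧ IsTable n (entry t) := by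
  simp only [cuspTables, List.mem_filter, List.mem_map, Prod.exists, exists_eq_right,
    Bool.and_eq_true, beq_iff_eq, decide_eq_true_eq]

theorem exists_mem_cuspTables_isLabelling {X : Type*} [MulAction PSL2Z X] [Finite X]
    [IsPretransitive PSL2Z X] (hS : ∀ x : X, Sp • x ≠ x) (hU : ∀ x : X, Up • x ≠ x) {n c : ℕ}
    (hn : Nat.card X = n) (hc : Nat.card (orbitRel.Quotient (Subgroup.zpowers Tp) X) = c)
    (hlt : n < 32) (hshort : n < 4 * c) :
    ∃ t ∈ cuspTables n c, ∃ f : ℕ → X, IsLabelling n (entry t) f := by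
  subst hn hc
  obtain ⟨x, hx⟩ := exists_minimalPeriod_lt_of_card_lt Tp hshort
  have : Nonempty X := ⟨x⟩
  obtain ⟨x₀, hmin⟩ := Finite.exists_min fun x : X => Function.minimalPeriod (Tp • ·) x
  obtain ⟨t, ht, hs, f, hf, rfl⟩ := exists_mem_tables_isLabelling hlt hS hU x₀
  have hn : Nat.card X ≠ 0 := Nat.card_ne_zero.2 ⟨this, inferInstance⟩
  exact ⟨t, mem_cuspTables.2 ⟨⟨_, ht⟩, hf.hasShortestCusp hs hn ((hmin x).trans_lt hx) hmin,
    (hf.card_orbitRel_zpowers_Tp hs hn).symm, hs⟩, f, hf⟩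

theorem exists_mem_pwFilter_not_rel {α : Type*} {R : α → α → Prop} [DecidableRel R] {l : List α}
    {a : α} (ha : a ∈ l) (hR : ¬ R a a) : ∃ b ∈ l.pwFilter R, ¬ R a b := by
  induction l with
  | nil => exact absurd ha List.not_mem_nil
  | cons b l ih =>
    by_cases hb : ∀ x ∈ l.pwFilter R, R b x
    · rw [List.pwFilter_cons_of_pos hb]
      rcases List.mem_cons.1 ha with rfl | ha
      · exact ⟨a, List.mem_cons_self, hR⟩
      · exact (ih ha).imp fun c hc => ⟨List.mem_cons_of_mem b hc.1, hc.2⟩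
    · rw [List.pwFilter_cons_of_neg hb]
      rcases List.mem_cons.1 ha with rfl | ha
      · simpa only [not_forall, exists_prop] using hb
      · exact ih ha

theorem IsLabelling.index_genusZero_torsionFree_iff {Γ : Subgroup PSL2Z} {n : ℕ} {s : ℕ → ℕ}
    {f : ℕ → PSL2Z ⧸ Γ} (hf : IsLabelling n s f) (hs : IsTable n s) (hn : n ≠ 0) :
    (Γ.index = n ∧ GenusZero Γ ∧ TorsionFree Γ) ↔ 6 * cusps n s = n + 12 := by
  have hΓ : TorsionFree Γ := torsionFree_iff.2 ⟨hf.Sp_smul_ne hs, hf.Up_smul_ne hs⟩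
  have hindex : Γ.index = n := hf.natCard_eq
  have hcusps : nOrb Tp Γ = cusps n s := hf.card_orbitRel_zpowers_Tp hs hn
  rw [genusZero_iff_of_torsionFree hΓ, hindex, hcusps]
  simp only [hΓ, and_true, true_and]

section

variable {n c : ℕ}

theorem isTable_of_mem_representatives {t : ℕ} (ht : t ∈ representatives n c) :
    IsTable n (entry t) :=
  (mem_cuspTables.1 (List.pwFilter_subset _ ht)).2.2.2

theorem cusps_of_mem_representatives {t : ℕ} (ht : t ∈ representatives n c) :
    cusps n (entry t) = c :=
  (mem_cuspTables.1 (List.pwFilter_subset _ ht)).2.2.1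

theorem exists_mem_representatives_subgroupConj (hn : n ≠ 0) (hlt : n < 24) (hc : 6 * c = n + 12)
    {Γ : Subgroup PSL2Z} (hΓ : Γ.index = n ∧ GenusZero Γ ∧ TorsionFree Γ) :
    ∃ t ∈ representatives n c, ∀ {Δ : Subgroup PSL2Z} {g : ℕ → PSL2Z ⧸ Δ},
      IsLabelling n (entry t) g → SubgroupConj Δ Γ := by
  obtain ⟨hindex, hgenus, htf⟩ := hΓ
  rw [genusZero_iff_of_torsionFree htf, hindex, ← hc] at hgenus
  have hcusps : nOrb Tp Γ = c := Nat.eq_of_mul_eq_mul_left (by norm_num) hgenus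
  have : Finite (PSL2Z ⧸ Γ) := Nat.finite_of_card_ne_zero (hindex.trans_ne hn)
  obtain ⟨hS, hU⟩ := torsionFree_iff.1 htf
  obtain ⟨t, ht, f, hf⟩ :=
    exists_mem_cuspTables_isLabelling hS hU hindex hcusps (by omega) (by omega)
  have hs : IsTable n (entry t) := (mem_cuspTables.1 ht).2.2.2
  have hrefl : isIso n (entry t) (entry t) :=
    (subgroupConj_iff_isIso hn hs hf hs hf).1 (subgroupConj_equivalence.refl Γ)
  obtain ⟨u, hu, htu⟩ := exists_mem_pwFilter_not_rel
    (R := fun t u => ¬ isIso n (entry t) (entry u)) ht (not_not.2 hrefl)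
  exact ⟨u, hu, fun hg => subgroupConj_equivalence.symm <| (subgroupConj_iff_isIso hn hs hf
    (isTable_of_mem_representatives hu) hg).2 (not_not.1 htu)⟩

theorem countClasses_eq_length_representatives (hn : n ≠ 0) (hlt : n < 24) (hc : 6 * c = n + 12) :
    countClasses (fun Γ => Γ.index = n ∧ GenusZero Γ ∧ TorsionFree Γ) =
      (representatives n c).length := by
  have htable (i : Fin (representatives n c).length) : IsTable n (entry (representatives n c)[i]) :=
    isTable_of_mem_representatives (List.getElem_mem _)
  choose Γ f hf using fun i => (htable i).exists_isLabelling hn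
  have hΓ (i) : (Γ i).index = n ∧ GenusZero (Γ i) ∧ TorsionFree (Γ i) := by
    have hcusps := cusps_of_mem_representatives (List.getElem_mem i.2)
    exact ((hf i).index_genusZero_torsionFree_iff (htable i) hn).2 ((congrArg _ hcusps).trans hc)
  have hne {i j} (hij : i < j) : ¬ SubgroupConj (Γ i) (Γ j) := by
    rw [subgroupConj_iff_isIso hn (htable i) (hf i) (htable j) (hf j)]
    exact List.pairwise_iff_getElem.1 (List.pairwise_pwFilter (cuspTables n c)) i j i.2 j.2 hij
  refine (card_quot_eq_card_of_reps (subgroupConj_equivalence.comap Subtype.val)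
    (fun i => ⟨Γ i, hΓ i⟩) (fun i j h => ?_) fun Δ => ?_).trans (Nat.card_fin _)
  · rcases lt_trichotomy i j with hij | hij | hij
    · exact absurd h (hne hij)
    · exact hij
    · exact absurd (subgroupConj_equivalence.symm h) (hne hij)
  · obtain ⟨t, ht, hconj⟩ := exists_mem_representatives_subgroupConj hn hlt hc Δ.2
    obtain ⟨i, hi, rfl⟩ := List.getElem_of_mem ht
    exact ⟨⟨i, hi⟩, hconj (hf ⟨i, hi⟩)⟩

end

set_option maxRecDepth 100000 in
theorem length_representatives_eighteen_five : (representatives 18 5).length = 26 := by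
  decide +kernel

/-- There are exactly 26 conjugacy classes of torsion-free genus-zero subgroups of
`PSL(2,ℤ)` of index 18. -/
theorem count_tf_index_eighteen :
    countClasses (fun Γ => Γ.index = 18 ∧ GenusZero Γ ∧ TorsionFree Γ) = 26 := by
  rw [countClasses_eq_length_representatives (c := 5) (by norm_num) (by norm_num) (by norm_num),
    length_representatives_eighteen_five]
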